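/- (Theorem 6.5, mirror symmetry in the plane.) Let G be a finite simple graph with |E| = 2|V| − 4, let s ∈ O(2) be a reflection (an orthogonal involution of ℝ² whose fixed subspace is 1-dimensional), S = {I, s}, and let Φ : S → Aut(G) be a homomorphism such that Φ(s) fixes no edge setwise. Let (G,p) be an S-symmetric framework of type Φ in ℝ² whose points p_i affinely span ℝ² and which admits no nonzero fully (S,Φ)-symmetric self-stress (this last hypothesis playing the role of the paper's '(S,Φ)-generic' assumption, as licensed by Remark 6.2). Then (G,p) has a finite flex preserving the symmetry throughout the path. -/

import Mathlib

open scoped Classical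

noncomputable section

abbrev Euc (d : ℕ) : Type := EuclideanSpace ℝ (Fin d)

/-- The subspace of points of `ℝ^d` fixed by a linear isometry (orthogonal transformation). -/
def fixedSpace {d : ℕ} (x : Euc d ≃ₗᵢ[ℝ] Euc d) : Submodule ℝ (Euc d) :=
  LinearMap.ker (x.toLinearEquiv.toLinearMap - LinearMap.id)

/-!
A plane reflection has trace `0`, and so has the involution it induces on configurations. Hence the
symmetric configurations have dimension `|V|`, while the invariant edge functions have dimension
`|E| / 2 = |V| - 2`, no edge being fixed. Invariant edge functions orthogonal to the image of the
symmetric rigidity map are exactly the symmetric self-stresses, so the map is onto and its kernel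
has dimension `2`. The symmetric infinitesimal rigid motions are the translations along the mirror,
a space of dimension `1`; some symmetric infinitesimal flex is therefore not rigid. Since the
symmetric length map is a submersion at `p`, the implicit function theorem integrates this flex to a
curve in its fibre.
-/

open Module Filter Topology

section Curves

variable {X Y : Type*} [NormedAddCommGroup X] [NormedSpace ℝ X]
  [NormedAddCommGroup Y] [NormedSpace ℝ Y]

lemma exists_curve_in_level_set [CompleteSpace X] [FiniteDimensional ℝ Y]
    {f : X → Y} {f' : X →L[ℝ] Y} {a : X} (hf : HasStrictFDerivAt f f' a) (hf' : f'.range = ⊤)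
    {u : X} (hu : f' u = 0) :
    ∃ γ : ℝ → X, γ 0 = a ∧ HasDerivAt γ u 0 ∧
      ∀ᶠ t in 𝓝 0, ContinuousAt γ t ∧ f (γ t) = f a := by
  let v : f'.ker := ⟨u, hu⟩
  let Ψ := hf.implicitToOpenPartialHomeomorph f f' hf'
  let line : ℝ → Y × f'.ker := fun t ↦ (f a, t • v)
  have line_zero : line 0 = (f a, 0) := by simp [line]
  have line_tendsto : Tendsto line (𝓝 0) (𝓝 (f a, 0)) :=
    line_zero ▸ (by fun_prop : Continuous line).tendsto 0
  refine ⟨fun t ↦ hf.implicitFunction f f' hf' (f a) (t • v), by simp, ?_, ?_⟩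
  · have hΨ := (hf.to_implicitFunction hf').hasFDerivAt
    rw [← zero_smul ℝ v] at hΨ
    exact hΨ.comp_hasDerivAt (0 : ℝ) (by simpa using (hasDerivAt_id (0 : ℝ)).smul_const v)
  · have mem_target : ∀ᶠ t in 𝓝 0, line t ∈ Ψ.target := line_tendsto.eventually <|
      Ψ.open_target.mem_nhds (hf.mem_implicitToOpenPartialHomeomorph_target hf')
    filter_upwards [mem_target, line_tendsto.eventually (hf.map_implicitFunction_eq hf')]
      with t ht hft
    exact ⟨(Ψ.symm.continuousAt ht).comp (by fun_prop : Continuous line).continuousAt, hft⟩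

lemma exists_path_in_level_set_leaving [CompleteSpace X] [FiniteDimensional ℝ Y]
    {f : X → Y} {f' : X →L[ℝ] Y} {a : X} (hf : HasStrictFDerivAt f f' a) (hf' : f'.range = ⊤)
    {u : X} (hu : f' u = 0)
    {g : X → ℝ} {g' : X →L[ℝ] ℝ} (hg : HasFDerivAt g g' a) (hgu : g' u ≠ 0) :
    ∃ γ : ℝ → X, ContinuousOn γ (Set.Icc 0 1) ∧ γ 0 = a ∧
      (∀ t ∈ Set.Icc (0 : ℝ) 1, f (γ t) = f a) ∧
      ∀ t ∈ Set.Ioc (0 : ℝ) 1, g (γ t) ≠ g a := by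
  obtain ⟨γ, rfl, hγ, hlevel⟩ := exists_curve_in_level_set hf hf' hu
  have leaves : ∀ᶠ t in 𝓝 0, t ≠ 0 → g (γ t) ≠ g (γ 0) :=
    eventually_nhdsWithin_iff.1 ((hg.comp_hasDerivAt 0 hγ).eventually_ne hgu)
  obtain ⟨ε, hε, good⟩ := Metric.eventually_nhds_iff.1 (hlevel.and leaves)
  have small {t : ℝ} (ht : t ∈ Set.Icc (0 : ℝ) 1) : dist (ε / 2 * t) 0 < ε := by
    rw [Real.dist_eq, sub_zero, abs_of_nonneg (mul_nonneg (half_pos hε).le ht.1)]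
    nlinarith [ht.2]
  refine ⟨fun t ↦ γ (ε / 2 * t), fun t ht ↦ ?_, by simp, fun t ht ↦ (good (small ht)).1.2,
    fun t ht ↦ (good (small ⟨ht.1.le, ht.2⟩)).2 (mul_pos (half_pos hε) ht.1).ne'⟩
  exact ((good (small ht)).1.1.comp (f := fun t ↦ ε / 2 * t) (by fun_prop)).continuousWithinAt

variable [FiniteDimensional ℝ X]

lemma hasStrictFDerivAt_bilinear_diagonal (B : X →ₗ[ℝ] X →ₗ[ℝ] Y) (hB : ∀ x y, B x y = B y x)
    (a : X) :
    HasStrictFDerivAt (fun x ↦ B x x) ((2 : ℝ) • LinearMap.toContinuousLinearMap (B a)) a := by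
  have := B.toContinuousBilinearMap.hasStrictFDerivAt_of_bilinear
    (hasStrictFDerivAt_id a) (hasStrictFDerivAt_id a)
  refine this.congr_fderiv ?_
  ext x
  simp [two_smul, hB x a]

lemma exists_path_bilinear_diagonal_eq [FiniteDimensional ℝ Y]
    {B : X →ₗ[ℝ] X →ₗ[ℝ] Y} (hB : ∀ x y, B x y = B y x)
    {q : X →ₗ[ℝ] X →ₗ[ℝ] ℝ} (hq : ∀ x y, q x y = q y x)
    {a u : X} (hsurj : Function.Surjective (B a)) (hu : B a u = 0) (hqu : q a u ≠ 0) :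
    ∃ γ : ℝ → X, ContinuousOn γ (Set.Icc 0 1) ∧ γ 0 = a ∧
      (∀ t ∈ Set.Icc (0 : ℝ) 1, B (γ t) (γ t) = B a a) ∧
      ∀ t ∈ Set.Ioc (0 : ℝ) 1, q (γ t) (γ t) ≠ q a a := by
  refine exists_path_in_level_set_leaving (hasStrictFDerivAt_bilinear_diagonal B hB a) ?_ (u := u)
    (by simp [hu]) (hasStrictFDerivAt_bilinear_diagonal q hq a).hasFDerivAt (by simpa using hqu)
  refine LinearMap.range_eq_top.2 fun y ↦ ?_
  obtain ⟨x, rfl⟩ := hsurj y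
  exact ⟨(2 : ℝ)⁻¹ • x, by simp⟩

end Curves

section Equivariant

variable {K ι M : Type*} [Field K] [AddCommGroup M] [Module K M]

/-- The functions intertwining `τ` with `C`. For `C = id` these are the functions constant on the
orbits of `τ`; for an isometry `C` of `ℝ^d`, the configurations with symmetry `(C, τ)`. -/
def equivariantFun (C : M →ₗ[K] M) (τ : ι → ι) : Submodule K (ι → M) where
  carrier := {y | ∀ i, C (y i) = y (τ i)}
  zero_mem' := by simp
  add_mem' hx hy i := by simp [hx i, hy i]
  smul_mem' c x hx i := by simp [hx i]

lemma mem_equivariantFun {C : M →ₗ[K] M} {τ : ι → ι} {y : ι → M} :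
    y ∈ equivariantFun C τ ↔ ∀ i, C (y i) = y (τ i) := Iff.rfl

lemma equivariantFun_eq_ker {C : M →ₗ[K] M} {τ : ι → ι} (hC : Function.Involutive C)
    (hτ : Function.Involutive τ) :
    equivariantFun C τ =
      LinearMap.ker (C.compLeft ι ∘ₗ LinearMap.funLeft K M τ - LinearMap.id) := by
  ext y
  simp only [mem_equivariantFun, LinearMap.mem_ker, LinearMap.sub_apply, sub_eq_zero,
    LinearMap.comp_apply, LinearMap.id_apply, funext_iff, LinearMap.compLeft_apply,
    Function.comp_apply, LinearMap.funLeft_apply]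
  exact ⟨fun h i ↦ by rw [← h, hC], fun h i ↦ by rw [← h (τ i), hτ]⟩

lemma trace_compLeft_comp_funLeft [Finite ι] [FiniteDimensional K M] (C : M →ₗ[K] M) (τ : ι → ι) :
    LinearMap.trace K (ι → M) (C.compLeft ι ∘ₗ LinearMap.funLeft K M τ) =
      (Function.fixedPoints τ).ncard * LinearMap.trace K M C := by
  have := Fintype.ofFinite ι
  let b := Module.finBasis K M
  have diagonal_block (i : ι) :
      ∑ k, b.repr (C ((Pi.single i (b k) : ι → M) (τ i))) k =
        if τ i = i then LinearMap.trace K M C else 0 := by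
    split_ifs with h
    · simp [h, LinearMap.trace_eq_matrix_trace K b, Matrix.trace, LinearMap.toMatrix_apply]
    · simp [h]
  rw [LinearMap.trace_eq_matrix_trace K (Pi.basis fun _ : ι ↦ b), Matrix.trace,
    Fintype.sum_sigma]
  simp only [Matrix.diag_apply, LinearMap.toMatrix_apply, Pi.basis_repr, Pi.basis_apply,
    LinearMap.comp_apply, LinearMap.compLeft_apply, Function.comp_apply, LinearMap.funLeft_apply,
    diagonal_block, ← Finset.sum_filter, Finset.sum_const, nsmul_eq_mul]
  rw [← Set.ncard_coe_finset]
  simp [Function.fixedPoints, Function.IsFixedPt]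

variable [NeZero (2 : K)] [FiniteDimensional K M]

lemma two_mul_finrank_ker_sub_id {T : M →ₗ[K] M} (hT : Function.Involutive T) :
    2 * (finrank K (LinearMap.ker (T - LinearMap.id)) : K) =
      finrank K M + LinearMap.trace K M T := by
  have two_ne : (2 : K) ≠ 0 := NeZero.ne 2
  have average_isProj : LinearMap.IsProj (LinearMap.ker (T - LinearMap.id))
      ((2 : K)⁻¹ • (LinearMap.id + T)) := by
    refine ⟨fun x ↦ ?_, fun x hx ↦ ?_⟩
    · simp [hT x, add_comm]
    · have hx : T x = x := by simpa [sub_eq_zero] using hx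
      rw [LinearMap.smul_apply, LinearMap.add_apply, LinearMap.id_apply, hx, ← two_smul K x,
        inv_smul_smul₀ two_ne]
  rw [← average_isProj.trace, map_smul, map_add, LinearMap.trace_id, smul_eq_mul,
    mul_inv_cancel_left₀ two_ne]

lemma two_mul_finrank_equivariantFun [Finite ι] {C : M →ₗ[K] M} {τ : ι → ι}
    (hC : Function.Involutive C) (hτ : Function.Involutive τ) :
    2 * (finrank K (equivariantFun C τ) : K) =
      Nat.card ι * finrank K M + (Function.fixedPoints τ).ncard * LinearMap.trace K M C := by
  have := Fintype.ofFinite ι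
  have twist_involutive : Function.Involutive (C.compLeft ι ∘ₗ LinearMap.funLeft K M τ) :=
    fun y ↦ funext fun i ↦ by simp [LinearMap.funLeft_apply, hC (y i), hτ i]
  rw [equivariantFun_eq_ker hC hτ, two_mul_finrank_ker_sub_id twist_involutive,
    trace_compLeft_comp_funLeft, Module.finrank_pi_fintype]
  simp

end Equivariant

lemma surjective_of_forall_dotProduct_eq_zero {K ι X : Type*} [Field K] [LinearOrder K]
    [IsStrictOrderedRing K] [Fintype ι] [AddCommGroup X] [Module K X] {W : Submodule K (ι → K)}
    (f : X →ₗ[K] W)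
    (h : ∀ ω ∈ W, (∀ x, ω ⬝ᵥ f x = 0) → ω = 0) : Function.Surjective f := by
  let dot : W →ₗ[K] Dual K W := (dotProductBilin K K).domRestrict₁₂ W W
  have dot_injective : Function.Injective dot := by
    refine (injective_iff_map_eq_zero dot).2 fun ω hω ↦ Subtype.ext ?_
    exact dotProduct_self_eq_zero.1 (LinearMap.congr_fun hω ω)
  have dot_surjective : Function.Surjective dot :=
    (LinearMap.injective_iff_surjective_of_finrank_eq_finrank
      Subspace.dual_finrank_eq.symm).1 dot_injective
  by_contra hf
  obtain ⟨ℓ, hℓ, hle⟩ := Submodule.exists_le_ker_of_lt_top _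
    (lt_top_iff_ne_top.2 (mt LinearMap.range_eq_top.1 hf))
  obtain ⟨ω, rfl⟩ := dot_surjective ℓ
  have hω : ω = 0 := Subtype.ext (h ω ω.2 fun x ↦ hle ⟨x, rfl⟩)
  exact hℓ (by rw [hω, map_zero])

section Darts

variable {V : Type*} {G : SimpleGraph V}

lemma sum_sum_neighborFinset_eq_sum_darts [Fintype V] [G.LocallyFinite] [Fintype G.Dart]
    {A : Type*} [AddCommMonoid A] (f : V → V → A) :
    ∑ i, ∑ j ∈ G.neighborFinset i, f i j = ∑ d : G.Dart, f d.fst d.snd := by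
  rw [Finset.sum_sigma']
  exact Finset.sum_bij' (fun x hx ↦ (⟨(x.1, x.2), by simpa using hx⟩ : G.Dart))
    (fun d _ ↦ ⟨d.fst, d.snd⟩) (by simp) (by simp) (by simp) (by simp)
    (fun _ _ ↦ rfl)

lemma sum_darts_eq_two_nsmul_sum_edgeSet [Fintype V] [DecidableRel G.Adj] [Fintype G.edgeSet]
    {A : Type*} [AddCommMonoid A] (h : Sym2 V → A) :
    ∑ d : G.Dart, h d.edge = 2 • ∑ e : G.edgeSet, h e := by
  rw [← Finset.sum_fiberwise Finset.univ (fun d : G.Dart ↦ (⟨d.edge, d.edge_mem⟩ : G.edgeSet)),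
    Finset.smul_sum]
  refine Finset.sum_congr rfl fun e _ ↦ ?_
  simp only [Subtype.ext_iff]
  rw [Finset.sum_congr rfl fun d hd ↦ congrArg h (Finset.mem_filter.1 hd).2, Finset.sum_const]
  congr
  convert G.dart_edge_fiber_card e e.2

end Darts

section Frameworks

variable {V E : Type*} [NormedAddCommGroup E] [InnerProductSpace ℝ E]

/-- The polarisation of the squared edge lengths: at the pair `s(i, j)` it is
`⟪x i - x j, y i - y j⟫`. Thus `strain x x` is the vector of squared lengths, and `strain p`,
restricted to the edges, is the rigidity matrix at `p`. -/
def strain : (V → E) →ₗ[ℝ] (V → E) →ₗ[ℝ] (Sym2 V → ℝ) :=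
  LinearMap.mk₂ ℝ
    (fun x y ↦ Sym2.lift ⟨fun i j ↦ inner ℝ (x i - x j) (y i - y j), fun i j ↦ by
      simpa using inner_neg_neg (x j - x i) (y j - y i)⟩)
    (fun x x' y ↦ by ext ⟨i, j⟩; simp [add_sub_add_comm, inner_add_left])
    (fun c x y ↦ by ext ⟨i, j⟩; simp [← smul_sub, inner_smul_left])
    (fun x y y' ↦ by ext ⟨i, j⟩; simp [add_sub_add_comm, inner_add_right])
    (fun c x y ↦ by ext ⟨i, j⟩; simp [← smul_sub, inner_smul_right])

lemma strain_mk (x y : V → E) (i j : V) :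
    strain x y s(i, j) = inner ℝ (x i - x j) (y i - y j) := rfl

lemma strain_self_mk (x : V → E) (i j : V) : strain x x s(i, j) = ‖x i - x j‖ ^ 2 :=
  real_inner_self_eq_norm_sq _

lemma strain_comm (x y : V → E) : strain x y = strain y x := by
  ext ⟨i, j⟩
  exact real_inner_comm _ _

/-- The configurations `y` with `C (y i) = y (σ i)` for all `i`. -/
abbrev symmetricConfig (C : E ≃ₗᵢ[ℝ] E) (σ : V → V) : Submodule ℝ (V → E) :=
  equivariantFun C.toLinearEquiv.toLinearMap σ

lemma strain_map_of_mem_symmetricConfig {C : E ≃ₗᵢ[ℝ] E} {σ : V → V} {x y : V → E}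
    (hx : x ∈ symmetricConfig C σ) (hy : y ∈ symmetricConfig C σ) (e : Sym2 V) :
    strain x y (e.map σ) = strain x y e := by
  induction e with
  | _ i j =>
    rw [Sym2.map_mk, strain_mk, strain_mk, ← hx, ← hx, ← hy, ← hy, ← map_sub, ← map_sub]
    exact C.inner_map_map _ _

/-- The symmetric infinitesimal motions of `p` preserving all pairwise distances to first order. -/
def symmetricRigidMotion (C : E ≃ₗᵢ[ℝ] E) (σ : V → V) (p : V → E) : Submodule ℝ (V → E) :=
  symmetricConfig C σ ⊓ LinearMap.ker (strain p)

variable (G : SimpleGraph V)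

/-- `ω` is a self-stress of `(G, p)`: it is in equilibrium at every vertex. Stresses are encoded as
functions on all pairs of vertices, of which only the values on edges matter. -/
def IsSelfStress [G.LocallyFinite] (p : V → E) (ω : Sym2 V → ℝ) : Prop :=
  ∀ i, ∑ j ∈ G.neighborFinset i, ω s(i, j) • (p i - p j) = 0

/-- A self-stress of `(G, p)` that is constant on `σ`-orbits of edges vanishes on all edges. -/
def NoSymmetricSelfStress [G.LocallyFinite] (σ : V → V) (p : V → E) : Prop :=
  ∀ ω : Sym2 V → ℝ, IsSelfStress G p ω → (∀ e ∈ G.edgeSet, ω (e.map σ) = ω e) →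
    ∀ e ∈ G.edgeSet, ω e = 0

/-- `(G, p)` has a finite flex all of whose configurations have symmetry `(C, σ)`. -/
def HasSymmetricFlex (C : E ≃ₗᵢ[ℝ] E) (σ : V → V) (p : V → E) : Prop :=
  ∃ P : ℝ → V → E,
    ContinuousOn P (Set.Icc 0 1) ∧
    P 0 = p ∧
    (∀ t ∈ Set.Icc (0 : ℝ) 1, ∀ i j : V, G.Adj i j → ‖P t i - P t j‖ = ‖p i - p j‖) ∧
    (∃ k l : V, ∀ t ∈ Set.Ioc (0 : ℝ) 1, ‖P t k - P t l‖ ≠ ‖p k - p l‖) ∧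
    ∀ t ∈ Set.Icc (0 : ℝ) 1, ∀ i, C (P t i) = P t (σ i)

variable {G}

/-- The edge functions constant on orbits of `φ`. -/
abbrev symmetricEdgeFun (φ : G ≃g G) : Submodule ℝ (G.edgeSet → ℝ) :=
  equivariantFun LinearMap.id φ.mapEdgeSet

lemma sum_edgeSet_mul_strain [Fintype V] [G.LocallyFinite] [Fintype G.edgeSet]
    (ω : Sym2 V → ℝ) (p y : V → E) :
    ∑ e : G.edgeSet, ω e * strain p y e =
      ∑ i, inner ℝ (∑ j ∈ G.neighborFinset i, ω s(i, j) • (p i - p j)) (y i) := by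
  let work (i j : V) : ℝ := ω s(i, j) * inner ℝ (p i - p j) (y i)
  have work_add_work_swap (d : G.Dart) :
      work d.fst d.snd + work d.snd d.fst = ω d.edge * strain p y d.edge := by
    simp only [work, SimpleGraph.Dart.edge, strain_mk, Sym2.eq_swap (a := d.snd)]
    rw [← neg_sub (p d.fst) (p d.snd), inner_neg_left, inner_sub_right]
    ring
  have sum_work_swap : ∑ d : G.Dart, work d.snd d.fst = ∑ d : G.Dart, work d.fst d.snd :=
    SimpleGraph.Dart.symm_involutive.bijective.sum_comp fun d : G.Dart ↦ work d.fst d.snd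
  have twice : 2 • ∑ e : G.edgeSet, ω e * strain p y e = 2 • ∑ d : G.Dart, work d.fst d.snd := by
    rw [← sum_darts_eq_two_nsmul_sum_edgeSet fun e ↦ ω e * strain p y e, two_nsmul]
    nth_rw 2 [← sum_work_swap]
    rw [← Finset.sum_add_distrib]
    exact Finset.sum_congr rfl fun d _ ↦ (work_add_work_swap d).symm
  rw [nsmul_right_injective two_ne_zero twice, ← sum_sum_neighborFinset_eq_sum_darts]
  simp only [work, sum_inner, inner_smul_left, RCLike.conj_to_real]

variable {C : E ≃ₗᵢ[ℝ] E} {φ : G ≃g G} {p : V → E}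

lemma netForce_mem_symmetricConfig [G.LocallyFinite] (hp : p ∈ symmetricConfig C φ)
    {ω : Sym2 V → ℝ} (hω : ∀ e ∈ G.edgeSet, ω (e.map φ) = ω e) :
    (fun i ↦ ∑ j ∈ G.neighborFinset i, ω s(i, j) • (p i - p j)) ∈ symmetricConfig C φ := by
  intro i
  simp only [map_sum, map_smul, map_sub, hp _]
  refine Finset.sum_equiv φ.toEquiv (fun j ↦ ?_) fun j hj ↦ ?_
  · simpa using φ.map_adj_iff.symm
  · rw [← hω s(i, j) (by simpa using hj)]
    rfl

lemma isSelfStress_of_forall_symmetricConfig [Finite V] [G.LocallyFinite] [Fintype G.edgeSet]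
    (hp : p ∈ symmetricConfig C φ) {ω : Sym2 V → ℝ}
    (hω : ∀ e ∈ G.edgeSet, ω (e.map φ) = ω e)
    (horth : ∀ y ∈ symmetricConfig C φ, ∑ e : G.edgeSet, ω e * strain p y e = 0) :
    IsSelfStress G p ω := by
  have := Fintype.ofFinite V
  -- Virtual work: displacing every vertex along its net force yields a sum of squares.
  have h := horth _ (netForce_mem_symmetricConfig hp hω)
  rw [sum_edgeSet_mul_strain,
    Finset.sum_eq_zero_iff_of_nonneg fun _ _ ↦ real_inner_self_nonneg] at h
  exact fun i ↦ inner_self_eq_zero.1 (h i (Finset.mem_univ i))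

variable (C φ) in
/-- The strain on edges, as a bilinear map from symmetric configurations to edge functions that are
constant on orbits of `φ`. Cutting down the target is what makes surjectivity at `p` equivalent to
the absence of symmetric self-stresses. -/
def symmetricStrain : symmetricConfig C φ →ₗ[ℝ] symmetricConfig C φ →ₗ[ℝ] symmetricEdgeFun φ :=
  LinearMap.mk₂ ℝ
    (fun x y ↦ ⟨fun e ↦ strain x.1 y.1 e, fun e ↦
      (strain_map_of_mem_symmetricConfig x.2 y.2 e.1).symm⟩)
    (fun _ _ _ ↦ by ext; simp) (fun _ _ _ ↦ by ext; simp)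
    (fun _ _ _ ↦ by ext; simp) (fun _ _ _ ↦ by ext; simp)

lemma symmetricStrain_apply (x y : symmetricConfig C φ) (e : G.edgeSet) :
    (symmetricStrain C φ x y : G.edgeSet → ℝ) e = strain x.1 y.1 e := rfl

lemma symmetricStrain_comm (x y : symmetricConfig C φ) :
    symmetricStrain C φ x y = symmetricStrain C φ y x := by
  ext e
  simp only [symmetricStrain_apply, strain_comm x.1]

lemma symmetricStrain_surjective [Finite V] [G.LocallyFinite] (hp : p ∈ symmetricConfig C φ)
    (hnostress : NoSymmetricSelfStress G φ p) :
    Function.Surjective (symmetricStrain C φ ⟨p, hp⟩) := by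
  have := Fintype.ofFinite G.edgeSet
  refine surjective_of_forall_dotProduct_eq_zero _ fun ω hω horth ↦ ?_
  let ω' : Sym2 V → ℝ := Function.extend Subtype.val ω 0
  have extends_ω (e : G.edgeSet) : ω' e = ω e := Subtype.val_injective.extend_apply ω 0 e
  have ω'_invariant (e) (he : e ∈ G.edgeSet) : ω' (e.map φ) = ω' e := by
    calc
      ω' (e.map φ) = ω (φ.mapEdgeSet ⟨e, he⟩) := extends_ω (φ.mapEdgeSet ⟨e, he⟩)
      _ = ω ⟨e, he⟩ := (hω ⟨e, he⟩).symm
      _ = ω' e := (extends_ω ⟨e, he⟩).symm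
  have ω'_stress : IsSelfStress G p ω' :=
    isSelfStress_of_forall_symmetricConfig hp ω'_invariant fun y hy ↦ by
      simpa only [extends_ω, dotProduct, symmetricStrain_apply] using horth ⟨y, hy⟩
  ext e
  rw [← extends_ω, hnostress ω' ω'_stress ω'_invariant e e.2, Pi.zero_apply]

lemma exists_symmetricStrain_eq_zero_of_finrank_lt [Finite V] [FiniteDimensional ℝ E]
    (hp : p ∈ symmetricConfig C φ)
    (hlt : finrank ℝ (symmetricEdgeFun φ) +
      finrank ℝ (symmetricRigidMotion C φ p) < finrank ℝ (symmetricConfig C φ)) :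
    ∃ u, symmetricStrain C φ ⟨p, hp⟩ u = 0 ∧ ∃ k l, strain p u s(k, l) ≠ 0 := by
  by_contra! hrigid
  let R := symmetricStrain C φ ⟨p, hp⟩
  have ker_le : (LinearMap.ker R).map (symmetricConfig C φ).subtype ≤
      symmetricRigidMotion C φ p := by
    rintro _ ⟨u, hu, rfl⟩
    exact ⟨u.2, LinearMap.mem_ker.2 (by ext ⟨k, l⟩; exact hrigid u hu k l)⟩
  have finrank_ker_le := Submodule.finrank_mono ker_le
  rw [Submodule.finrank_map_subtype_eq] at finrank_ker_le
  have := R.finrank_range_add_finrank_ker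
  have := (LinearMap.range R).finrank_le
  omega

theorem hasSymmetricFlex_of_finrank_lt [Finite V] [G.LocallyFinite] [FiniteDimensional ℝ E]
    (hp : p ∈ symmetricConfig C φ)
    (hnostress : NoSymmetricSelfStress G φ p)
    (hlt : finrank ℝ (symmetricEdgeFun φ) +
      finrank ℝ (symmetricRigidMotion C φ p) < finrank ℝ (symmetricConfig C φ)) :
    HasSymmetricFlex G C φ p := by
  have := Fintype.ofFinite V
  obtain ⟨u, hu, k, l, hkl⟩ := exists_symmetricStrain_eq_zero_of_finrank_lt hp hlt
  let q := (strain.compr₂ (LinearMap.proj s(k, l))).domRestrict₁₂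
    (symmetricConfig C φ) (symmetricConfig C φ)
  have q_comm (x y) : q x y = q y x := congrFun (strain_comm x.1 y.1) s(k, l)
  obtain ⟨γ, γ_cont, γ_zero, γ_edges, γ_leaves⟩ := exists_path_bilinear_diagonal_eq
    symmetricStrain_comm q_comm (symmetricStrain_surjective hp hnostress) hu hkl
  refine ⟨fun t ↦ γ t, continuous_subtype_val.comp_continuousOn γ_cont, congrArg _ γ_zero,
    fun t ht i j hij ↦ ?_, ⟨k, l, fun t ht heq ↦ γ_leaves t ht ?_⟩, fun t _ ↦ (γ t).2⟩
  · have := congrFun (congrArg Subtype.val (γ_edges t ht)) ⟨s(i, j), hij⟩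
    rw [symmetricStrain_apply, symmetricStrain_apply, strain_self_mk, strain_self_mk] at this
    exact (sq_eq_sq₀ (norm_nonneg _) (norm_nonneg _)).1 this
  · change strain (γ t).1 (γ t).1 s(k, l) = strain p p s(k, l)
    rw [strain_self_mk, strain_self_mk, heq]

end Frameworks

section Mirror

lemma exists_sub_notMem_of_not_vectorSpan_le {R M ι : Type*} [Ring R] [AddCommGroup M] [Module R M]
    {p : ι → M} {L : Submodule R M} (hspan : ¬ vectorSpan R (Set.range p) ≤ L) :
    ∃ k l, p k - p l ∉ L := by
  contrapose! hspan
  rw [vectorSpan_def, Submodule.span_le]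
  rintro _ ⟨_, ⟨k, rfl⟩, _, ⟨l, rfl⟩, rfl⟩
  exact hspan k l

lemma mem_orthogonal_of_inner_eq_zero_of_finrank_eq_one {E : Type*} [NormedAddCommGroup E]
    [InnerProductSpace ℝ E] {L : Submodule ℝ E} (hL : finrank ℝ L = 1) {x z : E} (hz : z ∈ L)
    (hz0 : z ≠ 0) (h : inner ℝ z x = 0) : x ∈ Lᗮ := by
  intro w hw
  obtain ⟨c, hc⟩ := (finrank_eq_one_iff_of_nonzero' (⟨z, hz⟩ : L) (by simpa using hz0)).1 hL ⟨w, hw⟩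
  have hc : c • z = w := congrArg Subtype.val hc
  rw [← hc, inner_smul_left, h, mul_zero]

lemma mem_fixedSpace {d : ℕ} {C : Euc d ≃ₗᵢ[ℝ] Euc d} {v : Euc d} :
    v ∈ fixedSpace C ↔ C v = v := by
  simp [fixedSpace, sub_eq_zero]

lemma sub_map_mem_fixedSpace_orthogonal {d : ℕ} (C : Euc d ≃ₗᵢ[ℝ] Euc d) (v : Euc d) :
    v - C v ∈ (fixedSpace C)ᗮ := by
  intro w hw
  rw [inner_sub_right, ← C.inner_map_map w v, mem_fixedSpace.1 hw, sub_self]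

variable {V : Type*} {C : Euc 2 ≃ₗᵢ[ℝ] Euc 2}

lemma finrank_fixedSpace_orthogonal (hrefl : finrank ℝ (fixedSpace C) = 1) :
    finrank ℝ (fixedSpace C)ᗮ = 1 := by
  have := (fixedSpace C).finrank_add_finrank_orthogonal
  rw [finrank_euclideanSpace_fin] at this
  omega

lemma trace_eq_zero_of_finrank_fixedSpace (hC : Function.Involutive C)
    (hrefl : finrank ℝ (fixedSpace C) = 1) :
    LinearMap.trace ℝ (Euc 2) C.toLinearEquiv.toLinearMap = 0 := by
  have h := two_mul_finrank_ker_sub_id (K := ℝ) (T := C.toLinearEquiv.toLinearMap) hC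
  change 2 * (finrank ℝ (fixedSpace C) : ℝ) = _ at h
  rw [hrefl, finrank_euclideanSpace_fin] at h
  push_cast at h
  linarith

lemma finrank_symmetricConfig [Finite V] (hC : Function.Involutive C)
    (hrefl : finrank ℝ (fixedSpace C) = 1) {σ : V → V} (hσ : Function.Involutive σ) :
    finrank ℝ (symmetricConfig C σ) = Nat.card V := by
  have h := two_mul_finrank_equivariantFun (K := ℝ) (C := C.toLinearEquiv.toLinearMap) hC hσ
  rw [trace_eq_zero_of_finrank_fixedSpace hC hrefl, finrank_euclideanSpace_fin] at h
  push_cast at h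
  exact_mod_cast (by linarith : (finrank ℝ (symmetricConfig C σ) : ℝ) = Nat.card V)

lemma two_mul_finrank_symmetricEdgeFun [Finite V] {G : SimpleGraph V} {φ : G ≃g G}
    (hφ : Function.Involutive φ) :
    2 * finrank ℝ (symmetricEdgeFun φ) =
      G.edgeSet.ncard + (Function.fixedPoints φ.mapEdgeSet).ncard := by
  have edge_involutive : Function.Involutive φ.mapEdgeSet := by
    rintro ⟨e, he⟩
    refine Subtype.ext ?_
    change (e.map φ).map φ = e
    rw [Sym2.map_map, hφ.comp_self, Sym2.map_id, id]
  have h := two_mul_finrank_equivariantFun (K := ℝ) (C := (LinearMap.id : ℝ →ₗ[ℝ] ℝ))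
    (fun _ ↦ rfl) edge_involutive
  rw [LinearMap.trace_id, finrank_self, Nat.cast_one, mul_one, mul_one,
    Nat.card_coe_set_eq] at h
  exact_mod_cast h

variable {σ : V → V} {p y : V → Euc 2}

lemma apply_mem_fixedSpace_of_mem_symmetricRigidMotion (hrefl : finrank ℝ (fixedSpace C) = 1)
    (hp : p ∈ symmetricConfig C σ) (hmirror : ∀ i, p i ∈ fixedSpace C → σ i = i)
    (hy : y ∈ symmetricRigidMotion C σ p) (i : V) : y i ∈ fixedSpace C := by
  have hpσ : C (p i) = p (σ i) := hp i
  have hyσ : C (y i) = y (σ i) := hy.1 i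
  by_contra hmoved
  have normal_ne_zero : y i - C (y i) ≠ 0 := fun h ↦
    hmoved (mem_fixedSpace.2 (sub_eq_zero.1 h).symm)
  have inner_eq_zero : inner ℝ (y i - C (y i)) (p i - C (p i)) = 0 := by
    rw [real_inner_comm, hpσ, hyσ, ← strain_mk, LinearMap.mem_ker.1 hy.2, Pi.zero_apply]
  have hp_fixed : p i - C (p i) ∈ (fixedSpace C)ᗮᗮ :=
    mem_orthogonal_of_inner_eq_zero_of_finrank_eq_one (finrank_fixedSpace_orthogonal hrefl)
      (sub_map_mem_fixedSpace_orthogonal C (y i)) normal_ne_zero inner_eq_zero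
  have on_mirror : p i - C (p i) = 0 := inner_self_eq_zero.1 <|
    hp_fixed _ (sub_map_mem_fixedSpace_orthogonal C (p i))
  have hσi := hmirror i (mem_fixedSpace.2 (sub_eq_zero.1 on_mirror).symm)
  exact hmoved (mem_fixedSpace.2 (by rw [hyσ, hσi]))

lemma apply_eq_apply_of_mem_symmetricRigidMotion (hrefl : finrank ℝ (fixedSpace C) = 1)
    (hp : p ∈ symmetricConfig C σ) (hmirror : ∀ i, p i ∈ fixedSpace C → σ i = i)
    (hspan : ¬ vectorSpan ℝ (Set.range p) ≤ (fixedSpace C)ᗮ)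
    (hy : y ∈ symmetricRigidMotion C σ p) (i j : V) : y i = y j := by
  have hfix := apply_mem_fixedSpace_of_mem_symmetricRigidMotion hrefl hp hmirror hy
  have eq_of_sub_notMem {i j : V} (hij : p i - p j ∉ (fixedSpace C)ᗮ) : y i = y j := by
    by_contra hne
    refine hij (mem_orthogonal_of_inner_eq_zero_of_finrank_eq_one hrefl
      (sub_mem (hfix i) (hfix j)) (sub_ne_zero.2 hne) ?_)
    rw [real_inner_comm, ← strain_mk, LinearMap.mem_ker.1 hy.2, Pi.zero_apply]
  obtain ⟨k, l, hkl⟩ := exists_sub_notMem_of_not_vectorSpan_le hspan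
  have eq_k (i : V) : y i = y k := by
    by_cases hik : p i - p k ∈ (fixedSpace C)ᗮ
    · have hil : p i - p l ∉ (fixedSpace C)ᗮ := fun hil ↦ hkl (by simpa using sub_mem hil hik)
      exact (eq_of_sub_notMem hil).trans (eq_of_sub_notMem hkl).symm
    · exact eq_of_sub_notMem hik
  rw [eq_k i, eq_k j]

lemma finrank_symmetricRigidMotion_le_one (hrefl : finrank ℝ (fixedSpace C) = 1)
    (hp : p ∈ symmetricConfig C σ) (hmirror : ∀ i, p i ∈ fixedSpace C → σ i = i)
    (hspan : ¬ vectorSpan ℝ (Set.range p) ≤ (fixedSpace C)ᗮ) :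
    finrank ℝ (symmetricRigidMotion C σ p) ≤ 1 := by
  obtain ⟨k, -⟩ := exists_sub_notMem_of_not_vectorSpan_le hspan
  let eval_k : symmetricRigidMotion C σ p →ₗ[ℝ] fixedSpace C :=
    (LinearMap.proj k ∘ₗ Submodule.subtype _).codRestrict _ fun y ↦
      apply_mem_fixedSpace_of_mem_symmetricRigidMotion hrefl hp hmirror y.2 k
  have eval_k_injective : Function.Injective eval_k := by
    intro x y hxy
    ext1
    funext i
    rw [apply_eq_apply_of_mem_symmetricRigidMotion hrefl hp hmirror hspan x.2 i k,
      apply_eq_apply_of_mem_symmetricRigidMotion hrefl hp hmirror hspan y.2 i k]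
    exact congrArg Subtype.val hxy
  exact hrefl ▸ LinearMap.finrank_le_finrank_of_injective eval_k_injective

theorem stmt_5_general [Finite V] {G : SimpleGraph V} [G.LocallyFinite]
    (hC : Function.Involutive C) (hrefl : finrank ℝ (fixedSpace C) = 1)
    {φ : G ≃g G} (hφ : Function.Involutive φ)
    (hcount : G.edgeSet.ncard + (Function.fixedPoints φ.mapEdgeSet).ncard + 4 ≤ 2 * Nat.card V)
    (hp : p ∈ symmetricConfig C φ) (hmirror : ∀ i, p i ∈ fixedSpace C → φ i = i)
    (hspan : ¬ vectorSpan ℝ (Set.range p) ≤ (fixedSpace C)ᗮ)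
    (hnostress : NoSymmetricSelfStress G φ p) :
    HasSymmetricFlex G C φ p := by
  refine hasSymmetricFlex_of_finrank_lt hp hnostress ?_
  have edges := two_mul_finrank_symmetricEdgeFun hφ
  have vertices := finrank_symmetricConfig hC hrefl hφ
  have rigid := finrank_symmetricRigidMotion_le_one hrefl hp hmirror hspan
  omega

end Mirror

/-- Theorem 6.5, mirror symmetry in the plane: `s ∈ O(2)` a
reflection (orthogonal involution with 1-dimensional fixed subspace),
`S = {I, s}`, `Φ(s) = σ` fixes no edge setwise, `|E| = 2|V| - 4`; then a
symmetric framework spanning the plane with no nonzero fully symmetric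
self-stress has a symmetry-preserving finite flex. -/
theorem stmt_5 {V : Type*} [Fintype V] [DecidableEq V]
    (G : SimpleGraph V) [DecidableRel G.Adj]
    (hcount : G.edgeFinset.card + 4 = 2 * Fintype.card V)
    (C : Euc 2 ≃ₗᵢ[ℝ] Euc 2) (hC2 : ∀ v, C (C v) = v)
    (hrefl : Module.finrank ℝ (fixedSpace C) = 1)
    (σ : Equiv.Perm V) (hσ2 : σ * σ = 1)
    (hσadj : ∀ i j : V, G.Adj (σ i) (σ j) ↔ G.Adj i j)
    (hnofixe : ∀ e ∈ G.edgeSet, Sym2.map σ e ≠ e)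
    (p : V → Euc 2) (hp : Function.Injective p)
    (hsym : ∀ i, C (p i) = p (σ i))
    (hspan : affineSpan ℝ (Set.range p) = ⊤)
    (hnostress : ∀ ω : Sym2 V → ℝ,
      (∀ i : V, ∑ j ∈ G.neighborFinset i, ω s(i, j) • (p i - p j) = 0) →
      (∀ e ∈ G.edgeSet, ω (Sym2.map σ e) = ω e) →
      ∀ e ∈ G.edgeSet, ω e = 0) :
    ∃ P : ℝ → V → Euc 2,
      ContinuousOn P (Set.Icc 0 1) ∧
      P 0 = p ∧
      (∀ t ∈ Set.Icc (0:ℝ) 1, ∀ i j : V, G.Adj i j → ‖P t i - P t j‖ = ‖p i - p j‖) ∧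
      (∃ k l : V, ∀ t ∈ Set.Ioc (0:ℝ) 1, ‖P t k - P t l‖ ≠ ‖p k - p l‖) ∧
      (∀ t ∈ Set.Icc (0:ℝ) 1, ∀ i, C (P t i) = P t (σ i)) := by
  let φ : G ≃g G := ⟨σ, hσadj _ _⟩
  have no_fixed_edge : Function.fixedPoints φ.mapEdgeSet = ∅ :=
    Set.eq_empty_of_forall_notMem fun e he ↦ hnofixe e e.2 (congrArg Subtype.val he)
  have edge_count : G.edgeSet.ncard = G.edgeFinset.card := by
    rw [← G.coe_edgeFinset, Set.ncard_coe_finset]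
  have vectorSpan_eq_top : vectorSpan ℝ (Set.range p) = ⊤ := by
    rw [← direction_affineSpan, hspan, AffineSubspace.direction_top]
  have mirror_normal_ne_top : (fixedSpace C)ᗮ ≠ ⊤ := fun h ↦ by
    rw [(fixedSpace C).orthogonal_eq_top_iff.1 h, finrank_bot] at hrefl
    exact zero_ne_one hrefl
  exact stmt_5_general hC2 hrefl (φ := φ) (Equiv.congr_fun hσ2)
    (by rw [no_fixed_edge, Set.ncard_empty, edge_count, Nat.card_eq_fintype_card]; exact hcount.le)
    hsym (fun i hi ↦ hp ((hsym i).symm.trans (mem_fixedSpace.1 hi)))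
    (by rwa [vectorSpan_eq_top, top_le_iff]) hnostress
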